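/- arXiv:2506.22203 — 2 statements merged into one kernel-verified Lean document; each statement's English description precedes it below -/
import Mathlib

section
/- One has K₂(x̂) = C₂ and K₂(x̂) < 0; in particular the coefficient C₂ of the candidate optimal value function is strictly negative. -/
open Real Filter

/-- If the quadratic `β - μ x - σ² x² / 2` is positive at `a`, then `a` lies below its larger
root. -/
lemma lt_larger_root {μ σ a β : ℝ} (hσ : 0 < σ) (h : μ * a + (1/2) * σ^2 * a^2 < β) :
    a < (-μ + Real.sqrt (μ^2 + 2*β*σ^2)) / σ^2 := by
  have hσ2 : 0 < σ^2 := by positivity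
  have hsq : (μ + a * σ^2)^2 < μ^2 + 2*β*σ^2 := by
    nlinarith [mul_lt_mul_of_pos_right h hσ2]
  rw [lt_div_iff₀ hσ2]
  linarith [Real.lt_sqrt_of_sq_lt hsq]

theorem stmt_11
    (μ σ c a β : ℝ)
    (hσ : σ > 0) (hc : c > 0) (ha : a > 0) (hβ : β > 0)
    (hβ' : β > μ * a + (1/2) * σ^2 * a^2)
    (lam₁ lam₂ K₁ xhat C₂ : ℝ)
    (hlam₁ : lam₁ = (-μ - Real.sqrt (μ^2 + 2*β*σ^2)) / σ^2)
    (hlam₂ : lam₂ = (-μ + Real.sqrt (μ^2 + 2*β*σ^2)) / σ^2)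
    (hK₁ : K₁ = 1 / (β - μ*a - (1/2)*σ^2*a^2))
    (hxhat : xhat = (1/a) * Real.log (lam₂*c*(β - μ*a - (1/2)*σ^2*a^2) / (lam₂*a - a^2)))
    (hC₂ : C₂ = -(a^2 / (lam₂^2 * (β - μ*a - (1/2)*σ^2*a^2))) * Real.exp ((a - lam₂) * xhat))
    (K₂ : ℝ → ℝ)
    (hK₂ : ∀ z, K₂ z = (c - K₁*a*Real.exp (a*z)) / (lam₂ * Real.exp (lam₂*z)))
    :
    K₂ xhat = C₂ ∧ K₂ xhat < 0 ∧ C₂ < 0 := by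
  have hlam : a < lam₂ := hlam₂ ▸ lt_larger_root hσ hβ'
  have hlam_pos : 0 < lam₂ := ha.trans hlam
  have hD : 0 < β - μ*a - (1/2)*σ^2*a^2 := by linarith
  generalize β - μ*a - (1/2)*σ^2*a^2 = D at *
  have hsub : 0 < lam₂ - a := sub_pos.mpr hlam
  have hden : lam₂*a - a^2 = a * (lam₂ - a) := by ring
  have hexp : Real.exp (a * xhat) = lam₂ * c * D / (a * (lam₂ - a)) := by
    rw [hxhat, ← mul_assoc, mul_one_div_cancel ha.ne', one_mul, hden, Real.exp_log (by positivity)]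
  have hneg : C₂ < 0 := by
    rw [hC₂, neg_mul]
    exact neg_neg_of_pos (by positivity)
  have heq : K₂ xhat = C₂ := by
    rw [hK₂, hC₂, hK₁, sub_mul, Real.exp_sub, hexp]
    field_simp
    ring
  exact ⟨heq, heq ▸ hneg, hneg⟩
end

section
/- Let T : ℝ → ℝ be the policy improvement map assigning to each boundary z the unique real w such that the interior of { x ∈ ℝ : q₀(x; z) ≥ 0 and q₁(x; z) ≤ 0 } equals (−∞, w). Then for every initial boundary z₀ ∈ ℝ, the iterated sequence defined by z_{n+1} = T(z_n) converges to x̂; that is, the policy iteration of singular control laws with lower-ray waiting regions converges to the optimal free boundary x̂ from any starting point. -/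
open Real Filter

/-- `L * K₂ z`, the normalised coefficient whose level sets govern the zero-order `q`-function. -/
noncomputable def scaledCoeff (L a k c z : ℝ) : ℝ :=
  (c - k * a * exp (a * z)) * exp (-(L * z))

/-- The first-order `q`-function of the boundary `z`, extended to all `x`. -/
noncomputable def firstOrderQ (L a k c β μ x z : ℝ) : ℝ :=
  exp (a * x) - β * (c * (x - z) + k * exp (a * z) + (c - k * a * exp (a * z)) / L) + μ * c

section

variable {L a k c β μ s b : ℝ}

lemma hasDerivAt_exp_const_mul (a x : ℝ) :
    HasDerivAt (fun x => exp (a * x)) (a * exp (a * x)) x := by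
  simpa [mul_comm] using ((hasDerivAt_id x).const_mul a).exp

lemma continuous_scaledCoeff : Continuous (scaledCoeff L a k c) := by
  unfold scaledCoeff
  fun_prop

lemma continuous_firstOrderQ :
    Continuous fun p : ℝ × ℝ => firstOrderQ L a k c β μ p.1 p.2 := by
  unfold firstOrderQ
  fun_prop

lemma hasDerivAt_scaledCoeff (x : ℝ) :
    HasDerivAt (scaledCoeff L a k c)
      (exp (-(L * x)) * ((L - a) * (k * a * exp (a * x)) - L * c)) x := by
  have h₁ := ((hasDerivAt_exp_const_mul a x).const_mul (k * a)).const_sub c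
  have h₂ : HasDerivAt (fun x => exp (-(L * x))) (-L * exp (-(L * x))) x := by
    simpa using hasDerivAt_exp_const_mul (-L) x
  exact (h₁.mul h₂).congr_deriv (by ring)

/-- The marginal quantity `(L - a) * k * a * exp (a * x) - L * c` is increasing and vanishes
at `b`. -/
lemma marginal_neg (ha : 0 < a) (hk : 0 < k) (hL : a < L)
    (hb : (L - a) * (k * a * exp (a * b)) = L * c) {x : ℝ} (hx : x < b) :
    (L - a) * (k * a * exp (a * x)) - L * c < 0 := by
  rw [← hb, sub_neg]
  have : 0 < L - a := sub_pos.2 hL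
  gcongr

lemma marginal_pos (ha : 0 < a) (hk : 0 < k) (hL : a < L)
    (hb : (L - a) * (k * a * exp (a * b)) = L * c) {x : ℝ} (hx : b < x) :
    0 < (L - a) * (k * a * exp (a * x)) - L * c := by
  rw [← hb, sub_pos]
  have : 0 < L - a := sub_pos.2 hL
  gcongr

lemma scaledCoeff_strictAntiOn (ha : 0 < a) (hk : 0 < k) (hL : a < L)
    (hb : (L - a) * (k * a * exp (a * b)) = L * c) :
    StrictAntiOn (scaledCoeff L a k c) (Set.Iic b) := by
  refine strictAntiOn_of_deriv_neg (convex_Iic b) continuous_scaledCoeff.continuousOn ?_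
  intro x hx
  rw [interior_Iic] at hx
  rw [(hasDerivAt_scaledCoeff x).deriv]
  exact mul_neg_of_pos_of_neg (exp_pos _) (marginal_neg ha hk hL hb hx)

lemma scaledCoeff_strictMonoOn (ha : 0 < a) (hk : 0 < k) (hL : a < L)
    (hb : (L - a) * (k * a * exp (a * b)) = L * c) :
    StrictMonoOn (scaledCoeff L a k c) (Set.Ici b) := by
  refine strictMonoOn_of_deriv_pos (convex_Ici b) continuous_scaledCoeff.continuousOn ?_
  intro x hx
  rw [interior_Ici] at hx
  rw [(hasDerivAt_scaledCoeff x).deriv]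
  exact mul_pos (exp_pos _) (marginal_pos ha hk hL hb hx)

/-- Smooth fit: on the diagonal the first-order `q`-function is a multiple of the marginal
quantity. -/
lemma firstOrderQ_self (hL : L ≠ 0) (hβ : β = μ * L + s * L ^ 2)
    (hk : k * (β - μ * a - s * a ^ 2) = 1) (z : ℝ) :
    firstOrderQ L a k c β μ z z = s * ((L - a) * (k * a * exp (a * z)) - L * c) := by
  have hβL : β / L = μ + s * L := by rw [hβ]; field_simp
  calc
    firstOrderQ L a k c β μ z z
      = exp (a * z) - β * k * exp (a * z) - β / L * (c - k * a * exp (a * z)) + μ * c := by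
        unfold firstOrderQ; ring
    _ = k * (β - μ * a - s * a ^ 2) * exp (a * z) - β * k * exp (a * z)
          - (μ + s * L) * (c - k * a * exp (a * z)) + μ * c := by rw [hβL, hk]; ring
    _ = _ := by ring

lemma hasDerivAt_firstOrderQ (z x : ℝ) :
    HasDerivAt (fun x => firstOrderQ L a k c β μ x z) (a * exp (a * x) - β * c) x := by
  have h := (((((hasDerivAt_id x).sub_const z).const_mul c).add_const
    (k * exp (a * z))).add_const ((c - k * a * exp (a * z)) / L)).const_mul β
  exact (((hasDerivAt_exp_const_mul a x).sub h).add_const (μ * c)).congr_deriv (by ring)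

lemma firstOrderQ_strictMonoOn (ha : 0 < a) (hL : a < L) (hc : 0 < c) (hs : 0 < s)
    (hβ : β = μ * L + s * L ^ 2) (hk : k * (β - μ * a - s * a ^ 2) = 1)
    (hb : (L - a) * (k * a * exp (a * b)) = L * c) (z : ℝ) :
    StrictMonoOn (fun x => firstOrderQ L a k c β μ x z) (Set.Ici b) := by
  refine strictMonoOn_of_deriv_pos (convex_Ici b)
    (fun x _ => (hasDerivAt_firstOrderQ z x).continuousAt.continuousWithinAt) ?_
  intro x hx
  rw [interior_Ici] at hx
  rw [(hasDerivAt_firstOrderQ z x).deriv]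
  have hb' : a * exp (a * b) - β * c = s * L * a * c := by
    have hne : L - a ≠ 0 := (sub_pos.2 hL).ne'
    have : (L - a) * (a * exp (a * b)) = L * c * (β - μ * a - s * a ^ 2) := by
      rw [← hb]; linear_combination (-(L - a) * a * exp (a * b)) * hk
    apply mul_left_cancel₀ hne
    rw [mul_sub, this, hβ]
    ring
  have hpos : 0 < s * L * a * c := by
    have := ha.trans hL
    positivity
  have : a * exp (a * b) < a * exp (a * x) := by
    have := Set.mem_Ioi.1 hx
    gcongr
  linarith

lemma hasDerivAt_firstOrderQ_right (hL : L ≠ 0) (x z : ℝ) :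
    HasDerivAt (fun z => firstOrderQ L a k c β μ x z)
      (-(β / L * ((L - a) * (k * a * exp (a * z)) - L * c))) z := by
  have h := ((((hasDerivAt_id z).const_sub x).const_mul c).add
    ((hasDerivAt_exp_const_mul a z).const_mul k)).add
    ((((hasDerivAt_exp_const_mul a z).const_mul (k * a)).const_sub c).div_const L)
  refine (((h.const_mul β).const_sub (exp (a * x))).add_const (μ * c)).congr_deriv ?_
  field_simp
  ring

lemma firstOrderQ_right_strictMonoOn (ha : 0 < a) (hk : 0 < k) (hL : a < L) (hβ : 0 < β)
    (hb : (L - a) * (k * a * exp (a * b)) = L * c) (x : ℝ) :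
    StrictMonoOn (fun z => firstOrderQ L a k c β μ x z) (Set.Iic b) := by
  have hL₀ : 0 < L := ha.trans hL
  refine strictMonoOn_of_deriv_pos (convex_Iic b)
    (fun z _ => (hasDerivAt_firstOrderQ_right hL₀.ne' x z).continuousAt.continuousWithinAt) ?_
  intro z hz
  rw [interior_Iic] at hz
  rw [(hasDerivAt_firstOrderQ_right hL₀.ne' x z).deriv, neg_pos]
  exact mul_neg_of_pos_of_neg (div_pos hβ hL₀) (marginal_neg ha hk hL hb hz)

/-- If `z < b < y` and the coefficient at `y` dominates the one at `z`, then the control law with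
boundary `z` has a lower value at `y` than the one with boundary `y`. -/
lemma firstOrderQ_pos_of_scaledCoeff_le (ha : 0 < a) (hk₀ : 0 < k) (hL : a < L) (hβ₀ : 0 < β)
    (hs : 0 < s) (hβ : β = μ * L + s * L ^ 2) (hk : k * (β - μ * a - s * a ^ 2) = 1)
    (hb : (L - a) * (k * a * exp (a * b)) = L * c) {y z : ℝ} (hz : z < b) (hy : b < y)
    (h : scaledCoeff L a k c z ≤ scaledCoeff L a k c y) :
    0 < firstOrderQ L a k c β μ y z := by
  have hL₀ : 0 < L := ha.trans hL
  have hdiag : 0 < firstOrderQ L a k c β μ y y := by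
    rw [firstOrderQ_self hL₀.ne' hβ hk]
    exact mul_pos hs (marginal_pos ha hk₀ hL hb hy)
  have hexp (x : ℝ) : exp (-(L * x)) * exp (L * x) = 1 := by
    rw [← exp_add]; simp
  have hcancel (x : ℝ) : scaledCoeff L a k c x * exp (L * x) = c - k * a * exp (a * x) := by
    rw [scaledCoeff, mul_assoc, hexp, mul_one]
  have hderiv (x : ℝ) : HasDerivAt
      (fun x => k * exp (a * x) + scaledCoeff L a k c y / L * exp (L * x) - c * x)
      ((scaledCoeff L a k c y - scaledCoeff L a k c x) * exp (L * x)) x := by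
    refine ((((hasDerivAt_exp_const_mul a x).const_mul k).add
      ((hasDerivAt_exp_const_mul L x).const_mul (scaledCoeff L a k c y / L))).sub
      ((hasDerivAt_id x).const_mul c)).congr_deriv ?_
    rw [sub_mul, hcancel]
    field_simp
    ring
  have hmono : MonotoneOn
      (fun x => k * exp (a * x) + scaledCoeff L a k c y / L * exp (L * x) - c * x)
      (Set.Icc z y) := by
    refine monotoneOn_of_deriv_nonneg (convex_Icc z y)
      (fun x _ => (hderiv x).continuousAt.continuousWithinAt)
      (fun x _ => (hderiv x).differentiableAt.differentiableWithinAt) ?_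
    intro x hx
    rw [interior_Icc] at hx
    rw [(hderiv x).deriv]
    refine mul_nonneg (sub_nonneg.2 ?_) (exp_pos _).le
    rcases le_total x b with hxb | hxb
    · exact ((scaledCoeff_strictAntiOn ha hk₀ hL hb).antitoneOn hz.le hxb hx.1.le).trans h
    · exact (scaledCoeff_strictMonoOn ha hk₀ hL hb).monotoneOn hxb hy.le hx.2.le
  have hzy := (hz.trans hy).le
  have hle := hmono (Set.left_mem_Icc.2 hzy) (Set.right_mem_Icc.2 hzy) hzy
  have hcz : (c - k * a * exp (a * z)) / L ≤ scaledCoeff L a k c y / L * exp (L * z) := by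
    rw [← hcancel z, div_mul_eq_mul_div]
    gcongr
  have hcy : scaledCoeff L a k c y / L * exp (L * y) = (c - k * a * exp (a * y)) / L := by
    rw [div_mul_eq_mul_div, hcancel]
  refine hdiag.trans_le ?_
  have hval : c * (y - z) + k * exp (a * z) + (c - k * a * exp (a * z)) / L ≤
      c * (y - y) + k * exp (a * y) + (c - k * a * exp (a * y)) / L := by
    simp only at hle
    linarith
  unfold firstOrderQ
  gcongr

end

/-- A map which swaps the two sides of `b`, subject to a relation `G (T y) = G y` above `b` and
`P (T z) z = 0` below `b` that excludes cycles of period two, has all its orbits converging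
to `b`. -/
lemma tendsto_iterate_of_alternating {T G : ℝ → ℝ} {P : ℝ → ℝ → ℝ} {b : ℝ}
    (hG : Continuous G) (hP : Continuous fun p : ℝ × ℝ => P p.1 p.2)
    (hanti : StrictAntiOn G (Set.Iic b)) (hmono : StrictMonoOn G (Set.Ici b))
    (hpos : ∀ y z, z < b → b < y → G z ≤ G y → 0 < P y z)
    (hfix : T b = b) (hright : ∀ z, b < z → T z < b ∧ G (T z) = G z)
    (hleft : ∀ z, z < b → b < T z ∧ P (T z) z = 0) (z₀ : ℝ) :
    Tendsto (fun n => T^[n] z₀) atTop (nhds b) := by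
  have below (z : ℝ) (hz : z < b) : Tendsto (fun n => T^[n] z) atTop (nhds b) := by
    set u : ℕ → ℝ := fun n => T^[2 * n] z
    have hsucc (n : ℕ) : u (n + 1) = T (T (u n)) := by
      simp only [u, mul_add, mul_one, Function.iterate_succ_apply']
    have hu (n : ℕ) : u n < b := by
      induction n with
      | zero => exact hz
      | succ n ih => rw [hsucc]; exact (hright _ (hleft _ ih).1).1
    have hGu (n : ℕ) : G (u (n + 1)) = G (T (u n)) := by
      rw [hsucc]; exact (hright _ (hleft _ (hu n)).1).2
    have humono : Monotone u := by
      refine monotone_nat_of_le_succ fun n => le_of_not_gt fun hlt => ?_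
      have hle : G (u n) ≤ G (T (u n)) := by
        rw [← hGu]
        exact hanti.antitoneOn (hu _).le (hu n).le hlt.le
      exact (hpos _ _ (hu n) (hleft _ (hu n)).1 hle).ne' (hleft _ (hu n)).2
    have hvanti : Antitone fun n => T (u n) := by
      refine antitone_nat_of_succ_le fun n => ?_
      refine (hmono.le_iff_le (hleft _ (hu _)).1.le (hleft _ (hu _)).1.le).1 ?_
      rw [← hGu, ← hGu]
      exact hanti.antitoneOn (hu _).le (hu _).le (humono (Nat.le_succ _))
    have hulim := tendsto_atTop_ciSup humono ⟨b, by rintro _ ⟨n, rfl⟩; exact (hu n).le⟩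
    have hvlim := tendsto_atTop_ciInf hvanti
      ⟨b, by rintro _ ⟨n, rfl⟩; exact (hleft _ (hu n)).1.le⟩
    generalize (⨆ n, u n) = l at hulim
    generalize (⨅ n, T (u n)) = m at hvlim
    have hl : l ≤ b := le_of_tendsto' hulim fun n => (hu n).le
    have hm : b ≤ m := ge_of_tendsto' hvlim fun n => (hleft _ (hu n)).1.le
    have hGlm : G l = G m := by
      refine tendsto_nhds_unique ((hG.tendsto l).comp ((tendsto_add_atTop_iff_nat 1).2 hulim)) ?_
      exact ((hG.tendsto m).comp hvlim).congr fun n => (hGu n).symm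
    have hPlm : P m l = 0 := by
      refine tendsto_nhds_unique ((hP.tendsto (m, l)).comp (hvlim.prodMk_nhds hulim)) ?_
      exact tendsto_const_nhds.congr fun n => (hleft _ (hu n)).2.symm
    have hmb : m = b := by
      refine (hm.eq_or_lt.resolve_right fun hbm => ?_).symm
      have hlb : l < b := by
        refine hl.lt_of_ne ?_
        rintro rfl
        exact (hmono Set.self_mem_Ici hm hbm).ne hGlm
      exact (hpos m l hlb hbm hGlm.le).ne' hPlm
    subst hmb
    obtain rfl : l = m := hanti.injOn hl Set.self_mem_Iic hGlm
    have hodd : Tendsto (fun n => T^[2 * n + 1] z) atTop (nhds l) := by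
      simpa only [u, Function.iterate_succ_apply'] using hvlim
    refine tendsto_def.2 fun s hs => mem_atTop_sets.2 ?_
    obtain ⟨N, hN⟩ := eventually_atTop.1 ((hulim.eventually_mem hs).and (hodd.eventually_mem hs))
    refine ⟨2 * N, fun n hn => ?_⟩
    obtain ⟨j, rfl | rfl⟩ := n.even_or_odd'
    · exact (hN j (by omega)).1
    · exact (hN j (by omega)).2
  rcases lt_trichotomy z₀ b with h | rfl | h
  · exact below z₀ h
  · simp only [Function.iterate_fixed hfix, tendsto_const_nhds]
  · rw [← tendsto_add_atTop_iff_nat 1]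
    exact below _ (hright _ h).1

theorem stmt_19
    (μ σ c a β : ℝ)
    (hσ : σ > 0) (hc : c > 0) (ha : a > 0) (hβ : β > 0)
    (hβ' : β > μ * a + (1/2) * σ^2 * a^2)
    (lam₁ lam₂ K₁ xhat C₂ : ℝ)
    (hlam₁ : lam₁ = (-μ - Real.sqrt (μ^2 + 2*β*σ^2)) / σ^2)
    (hlam₂ : lam₂ = (-μ + Real.sqrt (μ^2 + 2*β*σ^2)) / σ^2)
    (hK₁ : K₁ = 1 / (β - μ*a - (1/2)*σ^2*a^2))
    (hxhat : xhat = (1/a) * Real.log (lam₂*c*(β - μ*a - (1/2)*σ^2*a^2) / (lam₂*a - a^2)))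
    (hC₂ : C₂ = -(a^2 / (lam₂^2 * (β - μ*a - (1/2)*σ^2*a^2))) * Real.exp ((a - lam₂) * xhat))
    (K₂ : ℝ → ℝ)
    (hK₂ : ∀ z, K₂ z = (c - K₁*a*Real.exp (a*z)) / (lam₂ * Real.exp (lam₂*z)))
    (q₀ q₁ : ℝ → ℝ → ℝ)
    (hq₀ : ∀ x z, q₀ x z = if x < z then c - (K₁*a*Real.exp (a*x) + K₂ z * lam₂ * Real.exp (lam₂*x)) else 0)
    (hq₁ : ∀ x z, q₁ x z = if x < z then 0
      else Real.exp (a*x) - β * (c*(x - z) + K₁*Real.exp (a*z) + K₂ z * Real.exp (lam₂*z)) + μ*c)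
    (T : ℝ → ℝ)
    (hT : ∀ z : ℝ, interior {x : ℝ | q₀ x z ≥ 0 ∧ q₁ x z ≤ 0} = Set.Iio (T z)) :
    ∀ z₀ : ℝ, Tendsto (fun n => T^[n] z₀) atTop (nhds xhat) := by
  have hs : 0 < σ ^ 2 / 2 := by positivity
  have hD : 0 < β - μ * a - (1 / 2) * σ ^ 2 * a ^ 2 := by linarith
  have hK₁pos : 0 < K₁ := by rw [hK₁]; positivity
  have hK₁D : K₁ * (β - μ * a - σ ^ 2 / 2 * a ^ 2) = 1 := by
    rw [hK₁, show σ ^ 2 / 2 * a ^ 2 = (1 / 2) * σ ^ 2 * a ^ 2 by ring,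
      one_div_mul_cancel hD.ne']
  have hσL : σ ^ 2 * lam₂ = -μ + √(μ ^ 2 + 2 * β * σ ^ 2) := by
    rw [hlam₂]; field_simp
  have hroot : β = μ * lam₂ + σ ^ 2 / 2 * lam₂ ^ 2 := by
    have hsq : √(μ ^ 2 + 2 * β * σ ^ 2) ^ 2 = μ ^ 2 + 2 * β * σ ^ 2 := sq_sqrt (by positivity)
    rw [show √(μ ^ 2 + 2 * β * σ ^ 2) = σ ^ 2 * lam₂ + μ by linarith] at hsq
    apply mul_left_cancel₀ (pow_pos hσ 2).ne'
    linear_combination -hsq / 2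
  have haL : a < lam₂ := by
    have hlt : μ + σ ^ 2 * a < √(μ ^ 2 + 2 * β * σ ^ 2) := by
      apply lt_sqrt_of_sq_lt
      nlinarith [mul_pos (pow_pos hσ 2) hD]
    have : σ ^ 2 * a < σ ^ 2 * lam₂ := by linarith
    exact lt_of_mul_lt_mul_left this (by positivity)
  have hL : 0 < lam₂ := ha.trans haL
  have hLa : 0 < lam₂ - a := sub_pos.2 haL
  have hb : (lam₂ - a) * (K₁ * a * exp (a * xhat)) = lam₂ * c := by
    have hden : lam₂ * a - a ^ 2 = a * (lam₂ - a) := by ring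
    rw [hxhat, ← mul_assoc a, mul_one_div_cancel ha.ne', one_mul, hden,
      exp_log (by positivity), hK₁]
    generalize β - μ * a - (1 / 2) * σ ^ 2 * a ^ 2 = D at hD ⊢
    field_simp
  set G := scaledCoeff lam₂ a K₁ c with hGdef
  set P := firstOrderQ lam₂ a K₁ c β μ with hPdef
  have hG : Continuous G := continuous_scaledCoeff
  have hP : Continuous fun p : ℝ × ℝ => P p.1 p.2 := continuous_firstOrderQ
  have hPx (z : ℝ) : Continuous fun x => P x z := hP.comp (by fun_prop : Continuous (·, z))
  have hanti : StrictAntiOn G (Set.Iic xhat) := scaledCoeff_strictAntiOn ha hK₁pos haL hb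
  have hmono : StrictMonoOn G (Set.Ici xhat) := scaledCoeff_strictMonoOn ha hK₁pos haL hb
  have hPmono (z : ℝ) : StrictMonoOn (fun x => P x z) (Set.Ici xhat) :=
    firstOrderQ_strictMonoOn ha haL hc hs hroot hK₁D hb z
  have hdiag (z : ℝ) : P z z = σ ^ 2 / 2 * ((lam₂ - a) * (K₁ * a * exp (a * z)) - lam₂ * c) :=
    firstOrderQ_self hL.ne' hroot hK₁D z
  have hPb : P xhat xhat = 0 := by rw [hdiag, hb]; ring
  have hPpos {z : ℝ} (hz : xhat < z) : 0 < P z z := by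
    rw [hdiag]; exact mul_pos hs (marginal_pos ha hK₁pos haL hb hz)
  have mem_lt {x z : ℝ} (hxz : x < z) : (q₀ x z ≥ 0 ∧ q₁ x z ≤ 0) ↔ G z ≤ G x := by
    have h₁ : K₂ z * lam₂ = G z := by
      rw [hK₂, hGdef, scaledCoeff, exp_neg]; field_simp
    have h₂ : c - K₁ * a * exp (a * x) = G x * exp (lam₂ * x) := by
      rw [hGdef, scaledCoeff, exp_neg]; field_simp
    have h₃ : q₀ x z = (G x - G z) * exp (lam₂ * x) := by
      rw [hq₀, if_pos hxz, h₁, sub_mul, ← h₂]; ring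
    rw [h₃, hq₁, if_pos hxz, ge_iff_le, mul_nonneg_iff_of_pos_right (exp_pos _), sub_nonneg]
    simp
  have mem_ge {x z : ℝ} (hzx : z ≤ x) : (q₀ x z ≥ 0 ∧ q₁ x z ≤ 0) ↔ P x z ≤ 0 := by
    have h₁ : K₂ z * exp (lam₂ * z) = (c - K₁ * a * exp (a * z)) / lam₂ := by
      rw [hK₂]; field_simp
    rw [hq₀, hq₁, if_neg hzx.not_gt, if_neg hzx.not_gt, h₁]
    simp [hPdef, firstOrderQ]
  have sub_set (z : ℝ) {x : ℝ} (hx : x < T z) : q₀ x z ≥ 0 ∧ q₁ x z ≤ 0 := by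
    have : x ∈ interior {x : ℝ | q₀ x z ≥ 0 ∧ q₁ x z ≤ 0} := by rw [hT]; exact hx
    exact (interior_subset this : x ∈ {x : ℝ | q₀ x z ≥ 0 ∧ q₁ x z ≤ 0})
  have lt_T {x z : ℝ} (h : ∀ᶠ y in nhds x, q₀ y z ≥ 0 ∧ q₁ y z ≤ 0) : x < T z := by
    have : x ∈ interior {x : ℝ | q₀ x z ≥ 0 ∧ q₁ x z ≤ 0} := mem_interior_iff_mem_nhds.2 h
    rwa [hT] at this
  have le_xhat {z x : ℝ} (hz : xhat ≤ z) (hx : xhat < x) : ¬(q₀ x z ≥ 0 ∧ q₁ x z ≤ 0) := by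
    rcases lt_or_ge x z with hxz | hzx
    · rw [mem_lt hxz, not_le]
      exact hmono hx.le hz hxz
    · rw [mem_ge hzx, not_le]
      rcases hz.eq_or_lt with rfl | hz
      · exact hPb.symm.trans_lt (hPmono xhat Set.self_mem_Ici hx.le hx)
      · exact (hPpos hz).trans_le ((hPmono z).monotoneOn hz.le hx.le hzx)
  have T_le {z : ℝ} (hz : xhat ≤ z) : T z ≤ xhat := by
    by_contra! h
    obtain ⟨x, hx₁, hx₂⟩ := exists_between h
    exact le_xhat hz hx₁ (sub_set z hx₂)
  have le_of_left {f : ℝ → ℝ} (hf : Continuous f) {t u r : ℝ} (hut : u < t)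
      (h : ∀ x, u < x → x < t → f x ≤ r) : f t ≤ r := by
    refine le_of_tendsto (hf.continuousWithinAt (s := Set.Iio t) (x := t)) ?_
    filter_upwards [Ioo_mem_nhdsLT hut] with x hx using h x hx.1 hx.2
  refine tendsto_iterate_of_alternating hG hP hanti hmono
    (fun y z hz hy h => firstOrderQ_pos_of_scaledCoeff_le ha hK₁pos haL hβ hs hroot hK₁D hb hz hy h)
    ?_ ?_ ?_
  · refine (T_le le_rfl).antisymm (le_of_forall_lt fun x hx => lt_T ?_)
    filter_upwards [Iio_mem_nhds hx] with y hy
    exact (mem_lt hy).2 (hanti (Set.mem_Iio.1 hy).le Set.self_mem_Iic hy).le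
  · intro z hz
    have hTz : T z < z := (T_le hz.le).trans_lt hz
    have hge : G z ≤ G (T z) := by
      refine neg_le_neg_iff.1 (le_of_left hG.neg (sub_one_lt (T z)) fun x _ hx => ?_)
      exact neg_le_neg ((mem_lt (hx.trans hTz)).1 (sub_set z hx))
    refine ⟨(T_le hz.le).lt_of_ne fun h => ?_, hge.antisymm' (le_of_not_gt fun h => ?_)⟩
    · rw [h] at hge
      exact hge.not_gt (hmono Set.self_mem_Ici hz.le hz)
    · refine lt_irrefl (T z) (lt_T ?_)
      filter_upwards [Iio_mem_nhds hTz, hG.continuousAt.eventually_const_lt h] with x hx hGx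
      exact (mem_lt hx).2 hGx.le
  · intro z hz
    have hPxz : P xhat z < 0 := hPb ▸
      firstOrderQ_right_strictMonoOn ha hK₁pos haL hβ hb xhat hz.le Set.self_mem_Iic hz
    have eventually_mem {t : ℝ} (hzt : z < t) (ht : P t z < 0) :
        ∀ᶠ x in nhds t, q₀ x z ≥ 0 ∧ q₁ x z ≤ 0 := by
      filter_upwards [Ioi_mem_nhds hzt, (hPx z).continuousAt.eventually_lt_const ht] with x hx hPx'
      exact (mem_ge (Set.mem_Ioi.1 hx).le).2 hPx'.le
    have hlt : xhat < T z := lt_T (eventually_mem hz hPxz)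
    refine ⟨hlt, le_antisymm ?_ (le_of_not_gt fun h => ?_)⟩
    · exact le_of_left (hPx z) hlt fun x hx hxT => (mem_ge (hz.trans hx).le).1 (sub_set z hxT)
    · exact lt_irrefl (T z) (lt_T (eventually_mem (hz.trans hlt) h))
end
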